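/- There exists a constant C > 0 such that for every n ≥ 1, the proportion of permutations π of length n satisfying μ(1,π) = 0 is at least (1 − 1/e)² − C/n. In particular, the liminf as n → ∞ of the proportion of permutations of length n with principal Möbius function equal to zero is at least (1 − 1/e)² ≥ 0.3995. -/

import Mathlib

/-!
The permutation pattern poset and its Möbius function.

A permutation of length `n` is represented as an element of the symmetric
group on `Fin n`; the collection of all permutations of all lengths is the
sigma type `PPerm`.  Pattern containment `PPerm.Le` makes `PPerm` into the
permutation pattern poset, and `mu` is its Möbius function, defined by the
usual recursion `μ(σ,σ) = 1`, `μ(σ,π) = -∑_{σ ≤ λ < π} μ(σ,λ)` for `σ < π`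
and `μ(σ,π) = 0` otherwise.
-/

open scoped Classical

/-- A permutation of an arbitrary finite length `n`, as an element of the
symmetric group on `Fin n`. -/
abbrev PPerm : Type := Σ n : ℕ, Equiv.Perm (Fin n)

namespace PPerm

/-- Classical pattern containment `σ ≤ π`: there is a strictly increasing map
of positions along which `π` realises the same relative order as `σ`. -/
def Le (σ π : PPerm) : Prop :=
  ∃ f : Fin σ.1 → Fin π.1, StrictMono f ∧
    ∀ a b : Fin σ.1, σ.2 a < σ.2 b ↔ π.2 (f a) < π.2 (f b)

/-- Strict pattern containment. -/
def Lt (σ π : PPerm) : Prop := Le σ π ∧ σ ≠ π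

/-- The permutation `1` of length one. -/
def one : PPerm := ⟨1, 1⟩

/-- The direct sum `α ⊕ β` of two permutations: `β` is placed after and
above `α`. -/
def dsum (α β : PPerm) : PPerm :=
  ⟨α.1 + β.1, finSumFinEquiv.symm.trans ((Equiv.sumCongr α.2 β.2).trans finSumFinEquiv)⟩

end PPerm

/-- Fuelled recursion computing the Möbius function of the permutation
pattern poset.  Any `λ` with `σ ≤ λ < π` has length `< |π|`, so for any
fuel `≥ |π| + 1` this computes the standard recursion
`μ(σ,σ) = 1`, `μ(σ,π) = -∑_{σ ≤ λ < π} μ(σ,λ)` for `σ < π`, and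
`μ(σ,π) = 0` when `σ ≰ π`. -/
noncomputable def muAux : ℕ → PPerm → PPerm → ℤ
  | 0, _, _ => 0
  | n + 1, σ, π =>
    if σ = π then 1
    else if PPerm.Le σ π then
      - ∑ m ∈ Finset.range π.1,
          ∑ p ∈ Finset.univ.filter
              (fun p : Equiv.Perm (Fin m) => PPerm.Le σ ⟨m, p⟩ ∧ PPerm.Le ⟨m, p⟩ π),
            muAux n σ ⟨m, p⟩
    else 0

/-- The Möbius function of the permutation pattern poset. -/
noncomputable def mu (σ π : PPerm) : ℤ := muAux (π.1 + 1) σ π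

/-- The closed interval `[σ, π]` of the permutation pattern poset, as a
finset (any `λ ≤ π` has length `≤ |π|`). -/
noncomputable def intervalCC (σ π : PPerm) : Finset PPerm :=
  (Finset.range (π.1 + 1)).biUnion fun m =>
    (Finset.univ.filter fun p : Equiv.Perm (Fin m) =>
        PPerm.Le σ ⟨m, p⟩ ∧ PPerm.Le ⟨m, p⟩ π).image fun p => (⟨m, p⟩ : PPerm)

/-- The half-open interval `[σ, π)` of the permutation pattern poset. -/
noncomputable def intervalCO (σ π : PPerm) : Finset PPerm :=
  (intervalCC σ π).filter fun lam => lam ≠ π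

/-- The proportion of permutations of length `n` whose principal Möbius
function is zero. -/
noncomputable def zeroDensity (n : ℕ) : ℝ :=
  ((Finset.univ.filter fun p : Equiv.Perm (Fin n) =>
      mu PPerm.one ⟨n, p⟩ = 0).card : ℝ) / (Nat.factorial n : ℝ)

/-!
If `π` has an increasing adjacency `a, b` and a decreasing adjacency `c, d`, then `μ(1, π) = 0`.
By induction on the length, only the patterns without such an opposing pair contribute to the sum
defining `μ(1, π)`. An occurrence of such a pattern misses an entry of `{a, b}` or of `{c, d}`, and
the two entries of an adjacency are interchangeable, so these patterns lie below `π - b` or below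
`π - d`, and those below both lie below `π - b - d`. Each of the three intervals contributes `0`.

Let `I` and `D` count the increasing and the decreasing adjacencies of a uniformly random
permutation of length `n`. Marking an increasing adjacency amounts to inflating an entry of a
shorter permutation; this creates one increasing adjacency, and it destroys a decreasing one only if
the entry belongs to it. Hence the mixed factorial moments satisfy
`𝔼 (I)_j (D)_k = 1 + O(3 ^ (j + k) / n)`, as for two independent Poisson variables of mean `1`, and
inclusion–exclusion gives `P(I ≠ 0, D ≠ 0) = (1 - 1 / e) ^ 2 + O(1 / n)`.
-/

open scoped BigOperators Finset Nat

theorem strictMonoOn_update_id_of_covBy {α : Type*} [LinearOrder α] {a b : α}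
    (h : a ⋖ b ∨ b ⋖ a) : StrictMonoOn (Function.update id b a) {a}ᶜ := by
  intro x hx y hy hxy
  have lt_iff {z : α} (hza : z ≠ a) (hzb : z ≠ b) : z < a ↔ z < b := by
    rcases h with h | h
    · exact ⟨fun hz => hz.trans h.lt, fun hz => (h.le_of_lt hz).lt_of_ne hza⟩
    · exact ⟨fun hz => (h.le_of_lt hz).lt_of_ne hzb, fun hz => hz.trans h.lt⟩
  by_cases hxb : x = b <;> by_cases hyb : y = b
  · exact absurd hxy (hxb ▸ hyb ▸ lt_irrefl _)
  · subst hxb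
    simpa [hyb] using (lt_or_gt_of_ne hy).resolve_left
      fun hya => hxy.not_gt ((lt_iff hy hyb).1 hya)
  · subst hyb
    simpa [hxb] using (lt_iff hx hxb).2 hxy
  · simpa [hxb, hyb] using hxy

namespace PPerm

variable {σ τ π : PPerm}

theorem Le.refl (π : PPerm) : Le π π := ⟨id, strictMono_id, fun _ _ => Iff.rfl⟩

theorem Le.trans (hστ : Le σ τ) (hτπ : Le τ π) : Le σ π := by
  obtain ⟨f, hf, hf'⟩ := hστ
  obtain ⟨g, hg, hg'⟩ := hτπ
  exact ⟨g ∘ f, hg.comp hf, fun a b => (hf' a b).trans (hg' _ _)⟩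

theorem Le.length_le (h : Le σ π) : σ.1 ≤ π.1 := by
  obtain ⟨f, hf, -⟩ := h
  simpa using Fintype.card_le_of_injective f hf.injective

theorem Le.eq_of_length_le (h : Le σ π) (hlen : π.1 ≤ σ.1) : σ = π := by
  obtain ⟨m, σ⟩ := σ
  obtain ⟨n, π⟩ := π
  obtain rfl : m = n := le_antisymm h.length_le hlen
  obtain ⟨f, hf, hlt⟩ := h
  obtain rfl : f = id := hf.eq_id
  have hmono : StrictMono (π ∘ σ.symm) := fun a b hab => (hlt _ _).1 (by simpa using hab)
  have hπ : π = σ := Equiv.ext fun x => by simpa using congrFun hmono.eq_id (σ x)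
  rw [hπ]

theorem Lt.length_lt (h : Lt σ π) : σ.1 < π.1 :=
  lt_of_not_ge fun hlen => h.2 (h.1.eq_of_length_le hlen)

theorem Le.trans_lt (hστ : Le σ τ) (hτπ : Lt τ π) : Lt σ π :=
  ⟨hστ.trans hτπ.1, fun h => (hστ.length_le.trans_lt hτπ.length_lt).ne (congrArg Sigma.fst h)⟩

end PPerm

open PPerm

section Mobius

variable {σ τ π : PPerm}

theorem mem_intervalCC : τ ∈ intervalCC σ π ↔ Le σ τ ∧ Le τ π := by
  obtain ⟨m, τ⟩ := τ
  simp only [intervalCC, Finset.mem_biUnion, Finset.mem_range, Finset.mem_image,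
    Finset.mem_filter, Finset.mem_univ, true_and]
  constructor
  · rintro ⟨_, -, p, hp, h⟩
    exact h ▸ hp
  · exact fun h => ⟨m, Nat.lt_succ_of_le h.2.length_le, τ, h, rfl⟩

theorem mem_intervalCO : τ ∈ intervalCO σ π ↔ Le σ τ ∧ Lt τ π := by
  simp [intervalCO, mem_intervalCC, Lt, and_assoc]

theorem muAux_succ_of_lt {k : ℕ} (h : Lt σ π) :
    muAux (k + 1) σ π = -∑ τ ∈ intervalCO σ π, muAux k σ τ := by
  rw [muAux, if_neg h.2, if_pos h.1, Finset.sum_sigma']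
  congr 1
  refine Finset.sum_congr (Finset.ext fun τ => ?_) fun _ _ => rfl
  simp only [Finset.mem_sigma, Finset.mem_range, Finset.mem_filter, Finset.mem_univ, true_and,
    Sigma.eta, mem_intervalCO]
  exact ⟨fun ⟨hlen, hσ, hπ⟩ => ⟨hσ, hπ, by rintro rfl; exact hlen.false⟩,
    fun ⟨hσ, hπ⟩ => ⟨hπ.length_lt, hσ, hπ.1⟩⟩

theorem muAux_eq_muAux {k l : ℕ} (hk : π.1 < k) (hl : π.1 < l) :
    muAux k σ π = muAux l σ π := by
  induction k generalizing l π with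
  | zero => omega
  | succ k ih =>
    obtain ⟨l, rfl⟩ : ∃ l', l = l' + 1 := ⟨l - 1, by omega⟩
    by_cases h : Lt σ π
    · rw [muAux_succ_of_lt h, muAux_succ_of_lt h]
      congr 1
      refine Finset.sum_congr rfl fun τ hτ => ?_
      have := (mem_intervalCO.1 hτ).2.length_lt
      exact ih (by omega) (by omega)
    · by_cases hσπ : σ = π
      · simp [muAux, hσπ]
      · simp [muAux, hσπ, show ¬ Le σ π from fun hle => h ⟨hle, hσπ⟩]

theorem mu_eq_zero_of_not_le (h : ¬ Le σ π) : mu σ π = 0 := by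
  have hne : σ ≠ π := by rintro rfl; exact h (Le.refl _)
  simp [mu, muAux, h, hne]

theorem mu_eq_neg_sum (h : Lt σ π) : mu σ π = -∑ τ ∈ intervalCO σ π, mu σ τ := by
  rw [mu, muAux_succ_of_lt h]
  congr 1
  exact Finset.sum_congr rfl fun τ hτ =>
    muAux_eq_muAux (mem_intervalCO.1 hτ).2.length_lt τ.1.lt_succ_self

theorem sum_mu_intervalCC (h : σ ≠ π) : ∑ τ ∈ intervalCC σ π, mu σ τ = 0 := by
  by_cases hle : Le σ π
  · have hmem : π ∈ intervalCC σ π := mem_intervalCC.2 ⟨hle, Le.refl π⟩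
    rw [← Finset.add_sum_erase _ _ hmem, mu_eq_neg_sum ⟨hle, h⟩, intervalCO,
      Finset.filter_ne', neg_add_cancel]
  · exact Finset.sum_eq_zero fun τ hτ =>
      absurd ((mem_intervalCC.1 hτ).1.trans (mem_intervalCC.1 hτ).2) hle

/-- The intervals `[σ, α]` and `[σ, β]` cover `[σ, π)` and meet in `[σ, γ]` up to elements where
`μ(σ, ·)` vanishes, and `μ(σ, ·)` sums to `0` over each of the three. -/
theorem mu_eq_zero_of_cover {α β γ : PPerm} (hσπ : σ ≠ π) (hσα : σ ≠ α) (hσβ : σ ≠ β)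
    (hσγ : σ ≠ γ) (hα : Lt α π) (hβ : Lt β π) (hγα : Le γ α) (hγβ : Le γ β)
    (cover : ∀ τ, Lt τ π → mu σ τ ≠ 0 → Le τ α ∨ Le τ β)
    (meet : ∀ τ, Le τ α → Le τ β → mu σ τ ≠ 0 → Le τ γ) : mu σ π = 0 := by
  have hunion : ∑ τ ∈ intervalCC σ α ∪ intervalCC σ β, mu σ τ
      = ∑ τ ∈ intervalCO σ π, mu σ τ := by
    refine Finset.sum_subset (fun τ hτ => ?_) fun τ hτ hnot => ?_
    · simp only [Finset.mem_union, mem_intervalCC] at hτ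
      exact mem_intervalCO.2 (hτ.elim (.imp_right (·.trans_lt hα)) (.imp_right (·.trans_lt hβ)))
    · simp only [Finset.mem_union, mem_intervalCC] at hnot
      obtain ⟨hστ, hτπ⟩ := mem_intervalCO.1 hτ
      by_contra hmu
      exact hnot ((cover τ hτπ hmu).imp (.intro hστ) (.intro hστ))
  have hinter : ∑ τ ∈ intervalCC σ γ, mu σ τ
      = ∑ τ ∈ intervalCC σ α ∩ intervalCC σ β, mu σ τ := by
    refine Finset.sum_subset (fun τ hτ => ?_) fun τ hτ hnot => ?_
    · obtain ⟨hστ, hτγ⟩ := mem_intervalCC.1 hτ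
      exact Finset.mem_inter.2
        ⟨mem_intervalCC.2 ⟨hστ, hτγ.trans hγα⟩, mem_intervalCC.2 ⟨hστ, hτγ.trans hγβ⟩⟩
    · simp only [Finset.mem_inter, mem_intervalCC] at hτ
      by_contra hmu
      exact hnot (mem_intervalCC.2 ⟨hτ.1.1, meet τ hτ.1.2 hτ.2.2 hmu⟩)
  by_cases hle : Le σ π
  · have hsum := Finset.sum_union_inter (s₁ := intervalCC σ α) (s₂ := intervalCC σ β)
      (f := mu σ)
    rw [hunion, ← hinter, sum_mu_intervalCC hσα, sum_mu_intervalCC hσβ,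
      sum_mu_intervalCC hσγ, add_zero, add_zero] at hsum
    rw [mu_eq_neg_sum ⟨hle, hσπ⟩, hsum, neg_zero]
  · exact mu_eq_zero_of_not_le hle

end Mobius

namespace PPerm

variable {τ π : PPerm}

/-- `f` is an occurrence of the pattern `σ` in `π`, so that `Le σ π ↔ ∃ f, IsOccurrence σ π f`. -/
def IsOccurrence (σ π : PPerm) (f : Fin σ.1 → Fin π.1) : Prop :=
  StrictMono f ∧ ∀ a b, σ.2 a < σ.2 b ↔ π.2 (f a) < π.2 (f b)

/-- The pattern of `π` at the positions in `S`. -/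
noncomputable def restrict (π : PPerm) (S : Finset (Fin π.1)) : PPerm :=
  ⟨#S, (S.orderIsoOfFin rfl).toEquiv.trans
    ((Equiv.subtypeEquiv π.2 fun a => by simp).trans
      ((S.map π.2.toEmbedding).orderIsoOfFin (Finset.card_map _)).symm.toEquiv)⟩

theorem isOccurrence_orderEmbOfFin (π : PPerm) (S : Finset (Fin π.1)) :
    IsOccurrence (π.restrict S) π (S.orderEmbOfFin rfl) :=
  ⟨(S.orderEmbOfFin rfl).strictMono, fun _ _ =>
    ((S.map π.2.toEmbedding).orderIsoOfFin (Finset.card_map _)).symm.lt_iff_lt⟩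

theorem le_restrict_iff {S : Finset (Fin π.1)} :
    Le τ (π.restrict S) ↔ ∃ f, IsOccurrence τ π f ∧ Set.range f ⊆ S := by
  obtain ⟨hmono, hlt⟩ := isOccurrence_orderEmbOfFin π S
  constructor
  · rintro ⟨f, hf, hf'⟩
    refine ⟨S.orderEmbOfFin rfl ∘ f, ⟨hmono.comp hf, fun x y => (hf' x y).trans (hlt _ _)⟩, ?_⟩
    rintro _ ⟨x, rfl⟩
    exact S.orderEmbOfFin_mem rfl (f x)
  · rintro ⟨f, ⟨hf, hf'⟩, hS⟩
    have hlift (x : Fin τ.1) : ∃ y, S.orderEmbOfFin rfl y = f x := by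
      have hx : f x ∈ Set.range (S.orderEmbOfFin rfl) := by
        simpa using hS (Set.mem_range_self x)
      exact hx
    choose g hg using hlift
    refine ⟨g, fun x y hxy => hmono.lt_iff_lt.1 (by simpa only [hg] using hf hxy), fun x y => ?_⟩
    rw [hf', ← hg x, ← hg y]
    exact (hlt _ _).symm

theorem restrict_le_restrict {S T : Finset (Fin π.1)} (h : S ⊆ T) :
    Le (π.restrict S) (π.restrict T) :=
  le_restrict_iff.2 <| (le_restrict_iff.1 (Le.refl _)).imp fun _ =>
    .imp_right fun hf => hf.trans (Finset.coe_subset.2 h)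

theorem restrict_lt {S : Finset (Fin π.1)} (h : S ⊂ Finset.univ) : Lt (π.restrict S) π := by
  refine ⟨⟨_, isOccurrence_orderEmbOfFin π S⟩, fun heq => ?_⟩
  have hcard : #S = π.1 := congrArg Sigma.fst heq
  exact (Finset.card_lt_card h).ne (by simpa using hcard)

/-- `a` and `b` are consecutive positions carrying consecutive increasing values. -/
def IncAdj (π : PPerm) (a b : Fin π.1) : Prop := a ⋖ b ∧ π.2 a ⋖ π.2 b

/-- `a` and `b` are consecutive positions carrying consecutive decreasing values. -/
def DecAdj (π : PPerm) (a b : Fin π.1) : Prop := a ⋖ b ∧ π.2 b ⋖ π.2 a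

/-- `π` has both an increasing and a decreasing adjacency. -/
def HasOpposingAdjacencies (π : PPerm) : Prop :=
  (∃ a b, IncAdj π a b) ∧ ∃ a b, DecAdj π a b

variable {f g : Fin τ.1 → Fin π.1} {a b c d : Fin π.1}

namespace IsOccurrence

theorem covBy_of_covBy (hf : IsOccurrence τ π f) {x y : Fin τ.1} (h : f x ⋖ f y) : x ⋖ y :=
  ⟨hf.1.lt_iff_lt.1 h.lt, fun _ hx hy => h.2 (hf.1 hx) (hf.1 hy)⟩

theorem apply_covBy_of_apply_covBy (hf : IsOccurrence τ π f) {x y : Fin τ.1}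
    (h : π.2 (f x) ⋖ π.2 (f y)) : τ.2 x ⋖ τ.2 y := by
  refine ⟨(hf.2 _ _).2 h.lt, fun v hx hy => ?_⟩
  obtain ⟨z, rfl⟩ := τ.2.surjective v
  exact h.2 ((hf.2 _ _).1 hx) ((hf.2 _ _).1 hy)

theorem notMem_range_of_not_hasOpposingAdjacencies (hf : IsOccurrence τ π f)
    (hg : IsOccurrence τ π g) (hτ : ¬ HasOpposingAdjacencies τ) (hab : IncAdj π a b)
    (hcd : DecAdj π c d) :
    (a ∉ Set.range f ∨ b ∉ Set.range f) ∨ c ∉ Set.range g ∨ d ∉ Set.range g := by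
  contrapose! hτ
  obtain ⟨⟨⟨x, rfl⟩, ⟨y, rfl⟩⟩, ⟨z, rfl⟩, ⟨w, rfl⟩⟩ := hτ
  exact ⟨⟨x, y, hf.covBy_of_covBy hab.1, hf.apply_covBy_of_apply_covBy hab.2⟩,
    z, w, hg.covBy_of_covBy hcd.1, hg.apply_covBy_of_apply_covBy hcd.2⟩

/-- An entry and its neighbour in both position and value compare alike with all other entries, so
`a` can stand in for `b`. -/
theorem update_comp (hf : IsOccurrence τ π f) (hpos : a ⋖ b ∨ b ⋖ a)
    (hval : π.2 a ⋖ π.2 b ∨ π.2 b ⋖ π.2 a) (ha : a ∉ Set.range f) :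
    IsOccurrence τ π (Function.update id b a ∘ f) := by
  have hfa (x : Fin τ.1) : f x ∈ ({a}ᶜ : Set (Fin π.1)) := fun h => ha ⟨x, h⟩
  have hπfa (x : Fin τ.1) : π.2 (f x) ∈ ({π.2 a}ᶜ : Set (Fin π.1)) :=
    fun h => hfa x (π.2.injective h)
  have hconj (x : Fin π.1) :
      π.2 (Function.update id b a x) = Function.update id (π.2 b) (π.2 a) (π.2 x) := by
    by_cases hx : x = b <;> simp [hx]
  refine ⟨fun x y hxy => strictMonoOn_update_id_of_covBy hpos (hfa x) (hfa y) (hf.1 hxy),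
    fun x y => ?_⟩
  simp only [Function.comp_apply, hconj]
  rw [(strictMonoOn_update_id_of_covBy hval).lt_iff_lt (hπfa x) (hπfa y)]
  exact hf.2 x y

theorem exists_avoiding (hf : IsOccurrence τ π f) (hpos : a ⋖ b ∨ b ⋖ a)
    (hval : π.2 a ⋖ π.2 b ∨ π.2 b ⋖ π.2 a) (hmiss : a ∉ Set.range f ∨ b ∉ Set.range f) :
    ∃ f', IsOccurrence τ π f' ∧ Set.range f' ⊆ insert a (Set.range f) \ {b} := by
  by_cases hb : b ∈ Set.range f
  · refine ⟨_, hf.update_comp hpos hval (hmiss.resolve_right (not_not_intro hb)), ?_⟩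
    have hab : a ≠ b := hpos.elim CovBy.ne CovBy.ne'
    rintro _ ⟨x, rfl⟩
    by_cases hx : f x = b <;> simp [hx, hab]
  · exact ⟨f, hf, fun y hy => ⟨.inr hy, fun h => hb (h ▸ hy)⟩⟩

end IsOccurrence

theorem le_restrict_or_le_restrict (hτ : ¬ HasOpposingAdjacencies τ) (hτπ : Le τ π)
    (hab : IncAdj π a b) (hcd : DecAdj π c d) :
    Le τ (π.restrict {b}ᶜ) ∨ Le τ (π.restrict {d}ᶜ) := by
  obtain ⟨f, hf⟩ : ∃ f, IsOccurrence τ π f := hτπ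
  simp only [le_restrict_iff]
  have hsub {x y : Fin π.1} {s : Set (Fin π.1)} (h : s ⊆ insert x (Set.range f) \ {y}) :
      s ⊆ ↑({y}ᶜ : Finset (Fin π.1)) := fun z hz => by simpa using (h hz).2
  rcases hf.notMem_range_of_not_hasOpposingAdjacencies hf hτ hab hcd with hmiss | hmiss
  · exact .inl ((hf.exists_avoiding (.inl hab.1) (.inl hab.2) hmiss).imp fun _ =>
      .imp_right hsub)
  · exact .inr ((hf.exists_avoiding (.inl hcd.1) (.inr hcd.2) hmiss).imp fun _ =>
      .imp_right hsub)

theorem disjoint_of_incAdj_of_decAdj (hab : IncAdj π a b) (hcd : DecAdj π c d) :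
    Disjoint ({a, b} : Finset (Fin π.1)) {c, d} := by
  simp only [IncAdj, DecAdj, Fin.covBy_iff, Nat.covBy_iff_add_one_eq] at hab hcd
  have eq_of_val_eq {x y : Fin π.1} (h : (π.2 x : ℕ) = π.2 y) : (x : ℕ) = y :=
    congrArg Fin.val (π.2.injective (Fin.ext h))
  simp only [Finset.disjoint_insert_left, Finset.mem_insert, Finset.mem_singleton,
    Finset.disjoint_singleton_left, not_or]
  refine ⟨⟨?_, ?_⟩, ?_, ?_⟩ <;> rintro rfl
  · obtain rfl : b = d := Fin.ext (by omega)
    omega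
  · have := eq_of_val_eq (x := b) (y := c) (by omega)
    omega
  · have := eq_of_val_eq (x := a) (y := d) (by omega)
    omega
  · obtain rfl : a = c := Fin.ext (by omega)
    omega

theorem le_restrict_of_le_restrict_of_le_restrict (hτ : ¬ HasOpposingAdjacencies τ)
    (hab : IncAdj π a b) (hcd : DecAdj π c d) (hτb : Le τ (π.restrict {b}ᶜ))
    (hτd : Le τ (π.restrict {d}ᶜ)) : Le τ (π.restrict {b, d}ᶜ) := by
  have hdisj := disjoint_of_incAdj_of_decAdj hab hcd
  simp only [Finset.disjoint_insert_left, Finset.mem_insert, Finset.mem_singleton,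
    Finset.disjoint_singleton_left, not_or] at hdisj
  obtain ⟨⟨-, had⟩, hbc, -⟩ := hdisj
  have notMem {y : Fin π.1} {s : Set (Fin π.1)} (h : s ⊆ ↑({y}ᶜ : Finset (Fin π.1))) : y ∉ s :=
    fun hy => by simpa using h hy
  have subset {s : Set (Fin π.1)} (hb : b ∉ s) (hd : d ∉ s) :
      s ⊆ ↑({b, d}ᶜ : Finset (Fin π.1)) := fun z hz => by
    have hzb : z ≠ b := fun h => hb (h ▸ hz)
    have hzd : z ≠ d := fun h => hd (h ▸ hz)
    simp [hzb, hzd]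
  obtain ⟨f, hf, hfb⟩ := le_restrict_iff.1 hτb
  obtain ⟨g, hg, hgd⟩ := le_restrict_iff.1 hτd
  rw [le_restrict_iff]
  rcases hg.notMem_range_of_not_hasOpposingAdjacencies hf hτ hab hcd with hmiss | hmiss
  · obtain ⟨g', hg', hsub⟩ := hg.exists_avoiding (.inl hab.1) (.inl hab.2) hmiss
    refine ⟨g', hg', subset (fun h => (hsub h).2 rfl) fun h => ?_⟩
    exact (hsub h).1.elim (fun h => had h.symm) (notMem hgd)
  · obtain ⟨f', hf', hsub⟩ := hf.exists_avoiding (.inl hcd.1) (.inr hcd.2) hmiss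
    refine ⟨f', hf', subset (fun h => ?_) fun h => (hsub h).2 rfl⟩
    exact (hsub h).1.elim hbc (notMem hfb)

end PPerm

theorem mu_one_eq_zero_of_hasOpposingAdjacencies {π : PPerm} (h : HasOpposingAdjacencies π) :
    mu one π = 0 := by
  induction hn : π.1 using Nat.strong_induction_on generalizing π with
  | _ n ih =>
  subst hn
  obtain ⟨⟨a, b, hab⟩, c, d, hcd⟩ := h
  have hdisj := disjoint_of_incAdj_of_decAdj hab hcd
  have hbd : #({b, d} : Finset (Fin π.1)) ≤ 2 := Finset.card_le_two
  have hlen : 4 ≤ π.1 := by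
    have := Finset.card_le_univ (({a, b} : Finset (Fin π.1)) ∪ {c, d})
    rwa [Finset.card_union_of_disjoint hdisj, Finset.card_pair hab.1.ne,
      Finset.card_pair hcd.1.ne, Fintype.card_fin] at this
  have one_ne_restrict {T : Finset (Fin π.1)} (hT : #T ≤ 2) : one ≠ π.restrict Tᶜ := by
    intro heq
    have hcard : 1 = #Tᶜ := congrArg Sigma.fst heq
    rw [Finset.card_compl, Fintype.card_fin] at hcard
    omega
  have lt_of_compl {x : Fin π.1} : Lt (π.restrict {x}ᶜ) π :=
    restrict_lt (Finset.ssubset_univ_iff.2 (by simp))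
  have not_opposing {τ : PPerm} (hτ : Lt τ π) (hmu : mu one τ ≠ 0) :
      ¬ HasOpposingAdjacencies τ := fun hopp => hmu (ih _ hτ.length_lt hopp rfl)
  refine mu_eq_zero_of_cover (α := π.restrict {b}ᶜ) (β := π.restrict {d}ᶜ)
    (γ := π.restrict {b, d}ᶜ) (fun heq => ?_) (one_ne_restrict (by simp))
    (one_ne_restrict (by simp)) (one_ne_restrict hbd) lt_of_compl lt_of_compl
    (restrict_le_restrict (by simp)) (restrict_le_restrict (by simp))
    (fun τ hτ hmu => le_restrict_or_le_restrict (not_opposing hτ hmu) hτ.1 hab hcd)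
    (fun τ hb hd hmu => le_restrict_of_le_restrict_of_le_restrict
      (not_opposing ?_ hmu) hab hcd hb hd)
  · exact absurd (congrArg Sigma.fst heq) (by change 1 ≠ _; omega)
  · exact hb.trans_lt lt_of_compl

section Inflation

variable {m n : ℕ}

/-- The increasing adjacencies of `π`, recorded by the index `s` of the pair of positions
`(s, s + 1)`. -/
noncomputable def incSlots (π : Equiv.Perm (Fin (m + 1))) : Finset (Fin m) :=
  {s | π s.castSucc ⋖ π s.succ}

/-- The decreasing adjacencies of `π`, recorded by the index `s` of the pair of positions
`(s, s + 1)`. -/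
noncomputable def decSlots (π : Equiv.Perm (Fin (m + 1))) : Finset (Fin m) :=
  {s | π s.succ ⋖ π s.castSucc}

theorem mem_incSlots {π : Equiv.Perm (Fin (m + 1))} {s : Fin m} :
    s ∈ incSlots π ↔ (π s.castSucc : ℕ) + 1 = π s.succ := by
  simp [incSlots, Fin.covBy_iff, Nat.covBy_iff_add_one_eq]

theorem mem_decSlots {π : Equiv.Perm (Fin (m + 1))} {s : Fin m} :
    s ∈ decSlots π ↔ (π s.succ : ℕ) + 1 = π s.castSucc := by
  simp [decSlots, Fin.covBy_iff, Nat.covBy_iff_add_one_eq]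

/-- The permutation obtained from `σ` by inserting the value `v` at position `p`. -/
def insertAt (p v : Fin (n + 1)) (σ : Equiv.Perm (Fin n)) : Equiv.Perm (Fin (n + 1)) :=
  (finSuccEquiv' p).trans ((Equiv.optionCongr σ).trans (finSuccEquiv' v).symm)

@[simp]
theorem insertAt_apply_self (p v : Fin (n + 1)) (σ : Equiv.Perm (Fin n)) :
    insertAt p v σ p = v := by
  simp [insertAt]

@[simp]
theorem insertAt_apply_succAbove (p v : Fin (n + 1)) (σ : Equiv.Perm (Fin n)) (x : Fin n) :
    insertAt p v σ (p.succAbove x) = v.succAbove (σ x) := by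
  simp [insertAt]

theorem insertAt_bijective (p : Fin (n + 1)) :
    Function.Bijective fun q : Fin (n + 1) × Equiv.Perm (Fin n) => insertAt p q.1 q.2 := by
  rw [Fintype.bijective_iff_injective_and_card]
  refine ⟨fun ⟨v, σ⟩ ⟨w, τ⟩ h => ?_, by simp [Fintype.card_perm, Nat.factorial_succ]⟩
  obtain rfl : v = w := by simpa using congrArg (· p) h
  have hστ (x : Fin n) : σ x = τ x := by simpa using congrArg (· (p.succAbove x)) h
  rw [Equiv.ext hστ]

/-- The permutation obtained from `σ` by inflating its entry at position `i` into an increasing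
adjacency. -/
def inflate (σ : Equiv.Perm (Fin n)) (i : Fin n) : Equiv.Perm (Fin (n + 1)) :=
  insertAt i.succ (σ i).succ σ

theorem sum_filter_mem_incSlots {M : Type*} [AddCommMonoid M] (i : Fin (m + 1))
    (F : Equiv.Perm (Fin (m + 2)) → M) :
    ∑ π with i ∈ incSlots π, F π = ∑ σ : Equiv.Perm (Fin (m + 1)), F (inflate σ i) := by
  have hmem (v : Fin (m + 2)) (σ : Equiv.Perm (Fin (m + 1))) :
      i ∈ incSlots (insertAt i.succ v σ) ↔ v = (σ i).succ := by
    rw [mem_incSlots, insertAt_apply_self, ← Fin.succAbove_succ_self, insertAt_apply_succAbove,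
      Fin.ext_iff, Fin.val_succ]
    rcases lt_or_ge (σ i).castSucc v with h | h
    · rw [Fin.succAbove_of_castSucc_lt _ _ h, Fin.val_castSucc, eq_comm]
    · have hle : (v : ℕ) ≤ σ i := h
      rw [Fin.succAbove_of_le_castSucc _ _ h, Fin.val_succ]
      omega
  rw [Finset.sum_filter, ← (insertAt_bijective i.succ).sum_comp, Fintype.sum_prod_type_right]
  simp [hmem, inflate]

theorem sum_card_incSlots_mul {R : Type*} [Semiring R] (F : Equiv.Perm (Fin (m + 2)) → R) :
    ∑ π, (#(incSlots π) : R) * F π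
      = ∑ σ : Equiv.Perm (Fin (m + 1)), ∑ i, F (inflate σ i) := by
  have hcount (π : Equiv.Perm (Fin (m + 2))) :
      (#(incSlots π) : R) * F π = ∑ i, if i ∈ incSlots π then F π else 0 := by
    simp [Finset.sum_ite_mem]
  simp only [hcount]
  rw [Finset.sum_comm]
  simp only [← Finset.sum_filter, sum_filter_mem_incSlots]
  exact Finset.sum_comm

variable (σ : Equiv.Perm (Fin (m + 1))) (i : Fin (m + 1)) (s : Fin m)

theorem inflate_castSucc : inflate σ i i.castSucc = (σ i).castSucc := by
  rw [← Fin.succAbove_succ_self, ← Fin.succAbove_succ_self, inflate, insertAt_apply_succAbove]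

theorem inflate_succ : inflate σ i i.succ = (σ i).succ :=
  insertAt_apply_self _ _ _

theorem val_inflate_succ_succAbove (x : Fin (m + 1)) :
    (inflate σ i (i.succ.succAbove x) : ℕ) = σ x + if σ i < σ x then 1 else 0 := by
  rw [inflate, insertAt_apply_succAbove]
  split_ifs with h
  · rw [Fin.succAbove_succ_of_lt _ _ h, Fin.val_succ]
  · rw [Fin.succAbove_succ_of_le _ _ (not_lt.1 h), Fin.val_castSucc, add_zero]

theorem val_inflate_succAbove_succ :
    (inflate σ i (i.succAbove s).succ : ℕ) = σ s.succ + if σ i < σ s.succ then 1 else 0 := by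
  rw [← Fin.succ_succAbove_succ, val_inflate_succ_succAbove]

theorem val_inflate_succAbove_castSucc :
    (inflate σ i (i.succAbove s).castSucc : ℕ)
      = σ s.castSucc + if σ i ≤ σ s.castSucc then 1 else 0 := by
  by_cases h : s.castSucc = i
  · subst h
    rw [Fin.succAbove_castSucc_self, ← Fin.succ_castSucc, inflate_succ]
    simp
  · have hpos : (i.succAbove s).castSucc = i.succ.succAbove s.castSucc := by
      rcases lt_or_gt_of_ne h with h | h
      · rw [Fin.succAbove_of_castSucc_lt _ _ h, Fin.succAbove_succ_of_le _ _ h.le]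
      · rw [Fin.succAbove_of_le_castSucc _ _ h.le, Fin.succAbove_succ_of_lt _ _ h,
          Fin.succ_castSucc]
    have hne : σ i ≠ σ s.castSucc := fun heq => h (σ.injective heq).symm
    simp only [hpos, val_inflate_succ_succAbove, hne.le_iff_lt]

theorem incSlots_inflate :
    incSlots (inflate σ i) = insert i ((incSlots σ).map i.succAboveEmb) := by
  ext t
  rcases Fin.eq_self_or_eq_succAbove i t with rfl | ⟨s, rfl⟩
  · simp [mem_incSlots, inflate_castSucc, inflate_succ]
  · suffices i.succAbove s ∈ incSlots (inflate σ i) ↔ s ∈ incSlots σ by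
      simpa [Fin.succAbove_ne, Fin.succAbove_right_inj] using this
    rw [mem_incSlots, mem_incSlots, val_inflate_succAbove_succ, val_inflate_succAbove_castSucc]
    simp only [Fin.lt_def, Fin.le_def]
    split_ifs <;> omega

theorem decSlots_inflate :
    decSlots (inflate σ i)
      = {s ∈ decSlots σ | i ∉ ({s.castSucc, s.succ} : Finset (Fin (m + 1)))}.map
          i.succAboveEmb := by
  ext t
  obtain ht | ⟨s, rfl⟩ := Fin.eq_self_or_eq_succAbove i t
  · subst t
    suffices i ∉ decSlots (inflate σ i) by simpa [Fin.succAbove_ne] using this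
    rw [mem_decSlots, inflate_castSucc, inflate_succ, Fin.val_succ, Fin.val_castSucc]
    omega
  · have hne : (σ s.castSucc : ℕ) ≠ σ s.succ := fun h =>
      (Fin.castSucc_lt_succ (i := s)).ne (σ.injective (Fin.ext h))
    have hcast : i = s.castSucc ↔ (σ i : ℕ) = σ s.castSucc := by
      rw [← Fin.ext_iff, σ.injective.eq_iff]
    have hsucc : i = s.succ ↔ (σ i : ℕ) = σ s.succ := by
      rw [← Fin.ext_iff, σ.injective.eq_iff]
    suffices i.succAbove s ∈ decSlots (inflate σ i)
        ↔ s ∈ decSlots σ ∧ i ≠ s.castSucc ∧ i ≠ s.succ by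
      simpa [Fin.succAbove_right_inj] using this
    rw [mem_decSlots, mem_decSlots, val_inflate_succAbove_succ, val_inflate_succAbove_castSucc,
      Ne, Ne, hcast, hsucc]
    simp only [Fin.lt_def, Fin.le_def]
    split_ifs <;> omega

theorem card_incSlots_inflate : #(incSlots (inflate σ i)) = #(incSlots σ) + 1 := by
  rw [incSlots_inflate, Finset.card_insert_of_notMem (by simp [Fin.succAbove_ne]),
    Finset.card_map]

theorem card_decSlots_inflate :
    #(decSlots (inflate σ i))
      = #{s ∈ decSlots σ | i ∉ ({s.castSucc, s.succ} : Finset (Fin (m + 1)))} := by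
  rw [decSlots_inflate, Finset.card_map]

end Inflation

theorem card_mul_choose_le {α ι : Type*} [Fintype ι] [DecidableEq ι] {c : ℕ} {D : Finset α}
    {t : α → Finset ι} (ht : ∀ s ∈ D, #(t s) ≤ c) (k : ℕ) :
    Fintype.card ι * (#D).choose k
      ≤ ∑ i, (#{s ∈ D | i ∉ t s}).choose k + k * c * (#D).choose k := by
  have hcompl {T : Finset α} (hT : T ∈ D.powersetCard k) :
      Fintype.card ι ≤ #{i | ∀ s ∈ T, i ∉ t s} + k * c := by
    obtain ⟨hTD, rfl⟩ := Finset.mem_powersetCard.1 hT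
    have hfilter : (Finset.univ.filter fun i => ∀ s ∈ T, i ∉ t s) = (T.biUnion t)ᶜ := by
      ext i
      simp
    rw [hfilter, ← Finset.card_compl_add_card (T.biUnion t)]
    gcongr
    exact Finset.card_biUnion_le_card_mul T t c fun s hs => ht s (hTD hs)
  have hpowersetCard (i : ι) : {s ∈ D | i ∉ t s}.powersetCard k
      = {T ∈ D.powersetCard k | ∀ s ∈ T, i ∉ t s} := by
    ext T
    simp only [Finset.mem_powersetCard, Finset.mem_filter, Finset.subset_iff]
    grind
  calc Fintype.card ι * (#D).choose k
      = ∑ _T ∈ D.powersetCard k, Fintype.card ι := by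
        rw [Finset.sum_const, Finset.card_powersetCard, smul_eq_mul, mul_comm]
    _ ≤ ∑ T ∈ D.powersetCard k, (#{i | ∀ s ∈ T, i ∉ t s} + k * c) :=
        Finset.sum_le_sum fun T hT => hcompl hT
    _ = ∑ i, #{T ∈ D.powersetCard k | ∀ s ∈ T, i ∉ t s} + k * c * (#D).choose k := by
        rw [Finset.sum_add_distrib, Finset.sum_const, Finset.card_powersetCard, smul_eq_mul,
          mul_comm ((#D).choose k)]
        congr 1
        exact Finset.sum_card_bipartiteAbove_eq_sum_card_bipartiteBelow _
    _ = ∑ i, (#{s ∈ D | i ∉ t s}).choose k + k * c * (#D).choose k := by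
        simp only [← hpowersetCard, Finset.card_powersetCard]

theorem card_mul_descFactorial_le {α ι : Type*} [Fintype ι] [DecidableEq ι] {c : ℕ}
    {D : Finset α} {t : α → Finset ι} (ht : ∀ s ∈ D, #(t s) ≤ c) (k : ℕ) :
    Fintype.card ι * (#D).descFactorial k
      ≤ ∑ i, (#{s ∈ D | i ∉ t s}).descFactorial k + k * c * (#D).descFactorial k := by
  simp only [Nat.descFactorial_eq_factorial_mul_choose, ← Finset.mul_sum]
  linear_combination k ! * card_mul_choose_le ht k

section Moments

variable {m : ℕ}

theorem sum_descFactorial_decSlots_inflate_le (σ : Equiv.Perm (Fin (m + 1))) (k : ℕ) :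
    ∑ i, (#(decSlots (inflate σ i))).descFactorial k
      ≤ (m + 1) * (#(decSlots σ)).descFactorial k := by
  calc ∑ i, (#(decSlots (inflate σ i))).descFactorial k
      ≤ ∑ _i : Fin (m + 1), (#(decSlots σ)).descFactorial k := by
        refine Finset.sum_le_sum fun i _ => Nat.descFactorial_le k ?_
        rw [card_decSlots_inflate]
        exact Finset.card_filter_le _ _
    _ = (m + 1) * (#(decSlots σ)).descFactorial k := by simp

theorem le_sum_descFactorial_decSlots_inflate (σ : Equiv.Perm (Fin (m + 1))) (k : ℕ) :
    (m + 1) * (#(decSlots σ)).descFactorial k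
      ≤ ∑ i, (#(decSlots (inflate σ i))).descFactorial k
        + k * 2 * (#(decSlots σ)).descFactorial k := by
  simp only [card_decSlots_inflate]
  simpa using card_mul_descFactorial_le (D := decSlots σ) (c := 2)
    (fun s _ => Finset.card_le_two (a := s.castSucc) (b := s.succ)) k

/-- The mixed factorial moment `𝔼 (I)_j (D)_k`, where `I` and `D` count the increasing and the
decreasing adjacencies of a uniformly random permutation of length `m + 1`. -/
noncomputable def adjMoment (m j k : ℕ) : ℝ :=
  𝔼 π : Equiv.Perm (Fin (m + 1)),
    ((#(incSlots π)).descFactorial j * (#(decSlots π)).descFactorial k : ℝ)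

theorem adjMoment_zero_zero (m : ℕ) : adjMoment m 0 0 = 1 := by
  simp [adjMoment]

theorem adjMoment_zero_succ (j k : ℕ) : adjMoment 0 (j + 1) k = 0 := by
  simp [adjMoment, incSlots]

theorem adjMoment_comm (m j k : ℕ) : adjMoment m j k = adjMoment m k j := by
  have hinc (π : Equiv.Perm (Fin (m + 1))) : incSlots (π.trans Fin.revPerm) = decSlots π := by
    ext s
    simp only [mem_incSlots, mem_decSlots, Equiv.trans_apply, Fin.revPerm_apply, Fin.val_rev]
    omega
  have hdec (π : Equiv.Perm (Fin (m + 1))) : decSlots (π.trans Fin.revPerm) = incSlots π := by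
    ext s
    simp only [mem_incSlots, mem_decSlots, Equiv.trans_apply, Fin.revPerm_apply, Fin.val_rev]
    omega
  refine Fintype.expect_equiv (Equiv.mulLeft Fin.revPerm) _ _ fun π => ?_
  have htrans : Equiv.mulLeft Fin.revPerm π = π.trans Fin.revPerm := rfl
  rw [htrans, hinc, hdec, mul_comm]

/-- `(I)_{j+1} = I (I - 1)_j`, and the factor `I` chooses an adjacency to deflate. -/
theorem mul_adjMoment_succ (m j k : ℕ) :
    (m + 2) * adjMoment (m + 1) (j + 1) k
      = 𝔼 σ : Equiv.Perm (Fin (m + 1)), ((#(incSlots σ)).descFactorial j : ℝ)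
          * ∑ i, ((#(decSlots (inflate σ i))).descFactorial k : ℝ) := by
  have hsplit (n : ℕ) : n.descFactorial (j + 1) = n * (n - 1).descFactorial j := by
    cases n with
    | zero => simp
    | succ n => exact Nat.succ_descFactorial_succ n j
  have hdeflate := sum_card_incSlots_mul fun π : Equiv.Perm (Fin (m + 2)) =>
    ((#(incSlots π) - 1).descFactorial j * (#(decSlots π)).descFactorial k : ℝ)
  simp only [card_incSlots_inflate, Nat.add_sub_cancel, ← Finset.mul_sum] at hdeflate
  simp only [adjMoment, Fintype.expect_eq_sum_div_card, ← hdeflate, hsplit, Nat.cast_mul,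
    Fintype.card_perm, Fintype.card_fin, Nat.factorial_succ (m + 1), mul_assoc]
  push_cast
  field_simp
  ring

theorem mul_adjMoment_succ_le (m j k : ℕ) :
    (m + 2) * adjMoment (m + 1) (j + 1) k ≤ (m + 1) * adjMoment m j k := by
  rw [mul_adjMoment_succ, adjMoment, Finset.mul_expect]
  refine Finset.expect_le_expect fun σ _ => ?_
  rw [mul_left_comm]
  gcongr
  exact_mod_cast sum_descFactorial_decSlots_inflate_le σ k

theorem le_mul_adjMoment_succ (m j k : ℕ) :
    (m + 1 - 2 * k) * adjMoment m j k ≤ (m + 2) * adjMoment (m + 1) (j + 1) k := by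
  rw [mul_adjMoment_succ, adjMoment, Finset.mul_expect]
  refine Finset.expect_le_expect fun σ _ => ?_
  rw [mul_left_comm]
  gcongr
  have : (m + 1 : ℝ) * (#(decSlots σ)).descFactorial k
      ≤ ∑ i, ((#(decSlots (inflate σ i))).descFactorial k : ℝ)
        + k * 2 * (#(decSlots σ)).descFactorial k := by
    exact_mod_cast le_sum_descFactorial_decSlots_inflate σ k
  linarith

theorem forall_nat_of_symm_of_succ {P : ℕ → ℕ → Prop} (zero : P 0 0)
    (symm : ∀ j k, P j k → P k j) (succ : ∀ j k, P j k → P (j + 1) k) (j k : ℕ) : P j k := by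
  induction j with
  | succ j ih => exact succ j k ih
  | zero =>
    refine symm k 0 ?_
    induction k with
    | zero => exact zero
    | succ k ih => exact succ k 0 ih

theorem adjMoment_le_one (m j k : ℕ) : adjMoment m j k ≤ 1 := by
  refine forall_nat_of_symm_of_succ (P := fun j k => ∀ m, adjMoment m j k ≤ 1)
    (fun m => (adjMoment_zero_zero m).le) (fun j k h m => adjMoment_comm m j k ▸ h m)
    (fun j k h m => ?_) j k m
  cases m with
  | zero => simp [adjMoment_zero_succ]
  | succ m =>
    have := mul_adjMoment_succ_le m j k
    nlinarith [h m]

theorem one_sub_le_adjMoment (m j k : ℕ) : 1 - 3 ^ (j + k) / (m + 1) ≤ adjMoment m j k := by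
  refine forall_nat_of_symm_of_succ
    (P := fun j k => ∀ m : ℕ, 1 - 3 ^ (j + k) / (m + 1) ≤ adjMoment m j k)
    (fun m => ?_) (fun j k h m => ?_) (fun j k h m => ?_) j k m
  · rw [adjMoment_zero_zero]
    exact sub_le_self _ (by positivity)
  · rw [adjMoment_comm, add_comm]
    exact h m
  cases m with
  | zero =>
    have : (1 : ℝ) ≤ 3 ^ (j + 1 + k) := one_le_pow₀ (by norm_num)
    simpa [adjMoment_zero_succ] using this
  | succ m =>
    have hk : (1 + 2 * k : ℝ) ≤ 3 ^ (j + k) :=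
      calc (1 + 2 * k : ℝ) = 1 + k * 2 := by ring
        _ ≤ (1 + 2) ^ k := one_add_mul_le_pow (by norm_num) k
        _ ≤ 3 ^ (j + k) := by norm_num; exact pow_le_pow_right₀ (by norm_num) (by omega)
    have hih : (m + 1 : ℝ) - 3 ^ (j + k) ≤ (m + 1) * adjMoment m j k := by
      have := mul_le_mul_of_nonneg_left (h m) (by positivity : (0 : ℝ) ≤ m + 1)
      rwa [mul_sub, mul_one, mul_div_cancel₀ _ (by positivity)] at this
    have hloss : 2 * k * adjMoment m j k ≤ 2 * k :=
      mul_le_of_le_one_right (by positivity) (adjMoment_le_one m j k)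
    have hstep := le_mul_adjMoment_succ m j k
    rw [sub_le_comm, le_div_iff₀ (by positivity), add_right_comm, pow_succ]
    push_cast
    nlinarith

theorem abs_adjMoment_sub_one_le (m j k : ℕ) :
    |adjMoment m j k - 1| ≤ 3 ^ (j + k) / (m + 1) := by
  have h : (0 : ℝ) ≤ 3 ^ (j + k) / (m + 1) := by positivity
  exact abs_sub_le_iff.2
    ⟨by linarith [adjMoment_le_one m j k], by linarith [one_sub_le_adjMoment m j k]⟩

end Moments

section FactorialMoments

/-- The coefficients of the expansion `1_{x ≠ 0} = ∑ j, indicatorCoeff j * (x)_j` in falling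
factorials. -/
noncomputable def indicatorCoeff (j : ℕ) : ℝ := (if j = 0 then 1 else 0) - (-1) ^ j / j !

theorem abs_indicatorCoeff_le (j : ℕ) : |indicatorCoeff j| ≤ 1 / j ! := by
  cases j with
  | zero => simp [indicatorCoeff]
  | succ j => simp [indicatorCoeff, abs_div]

theorem hasSum_pow_div_factorial (x : ℝ) : HasSum (fun j : ℕ => x ^ j / j !) (Real.exp x) := by
  rw [Real.exp_eq_exp_ℝ]
  exact NormedSpace.expSeries_div_hasSum_exp x

theorem hasSum_indicatorCoeff_mul_pow (a : ℝ) :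
    HasSum (fun j => indicatorCoeff j * a ^ j) (1 - Real.exp (-a)) := by
  have hcoeff (j : ℕ) :
      indicatorCoeff j * a ^ j = (if j = 0 then 1 else 0) - (-a) ^ j / j ! := by
    have hite : (if j = 0 then 1 else 0 : ℝ) * a ^ j = if j = 0 then 1 else 0 := by
      split_ifs with h <;> simp [h]
    rw [indicatorCoeff, sub_mul, hite, div_mul_eq_mul_div, ← mul_pow, neg_one_mul]
  simp only [hcoeff]
  exact (hasSum_ite_eq 0 1).sub (hasSum_pow_div_factorial (-a))

theorem hasSum_neg_one_pow_mul_choose (x : ℕ) :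
    HasSum (fun j => (-1 : ℝ) ^ j * x.choose j) (if x = 0 then 1 else 0) := by
  have hsum : ∑ j ∈ Finset.range (x + 1), (-1 : ℝ) ^ j * x.choose j = if x = 0 then 1 else 0 := by
    exact_mod_cast Int.alternating_sum_range_choose (n := x)
  rw [← hsum]
  refine hasSum_sum_of_ne_finset_zero fun j hj => ?_
  rw [Nat.choose_eq_zero_of_lt (by simpa using hj), Nat.cast_zero, mul_zero]

theorem hasSum_indicatorCoeff_mul_descFactorial (x : ℕ) :
    HasSum (fun j => indicatorCoeff j * x.descFactorial j) (if x ≠ 0 then 1 else 0) := by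
  have hcoeff (j : ℕ) : indicatorCoeff j * x.descFactorial j
      = (if j = 0 then 1 else 0) - (-1) ^ j * x.choose j := by
    have hj : (j ! : ℝ) ≠ 0 := by positivity
    have hite : (if j = 0 then 1 else 0 : ℝ) * (j ! * x.choose j) = if j = 0 then 1 else 0 := by
      split_ifs with h <;> simp [h]
    rw [indicatorCoeff, Nat.descFactorial_eq_factorial_mul_choose, Nat.cast_mul, sub_mul, hite,
      ← mul_assoc, div_mul_cancel₀ _ hj]
  have hx : (if x ≠ 0 then 1 else 0 : ℝ) = 1 - if x = 0 then 1 else 0 := by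
    split_ifs <;> simp_all
  simp only [hcoeff, hx]
  exact (hasSum_ite_eq 0 1).sub (hasSum_neg_one_pow_mul_choose x)

theorem hasSum_mul_prod {ι κ : Type*} {f : ι → ℝ} {g : κ → ℝ} {s t : ℝ} (hf : HasSum f s)
    (hg : HasSum g t) : HasSum (fun p : ι × κ => f p.1 * g p.2) (s * t) :=
  hf.mul hg (summable_mul_of_summable_norm hf.summable.norm hg.summable.norm)

variable {Ω : Type*} [Fintype Ω] {X Y : Ω → ℕ} {a b B δ : ℝ}

/-- Method of moments: `a ^ j * b ^ k` are the mixed factorial moments of two independent Poisson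
variables of means `a` and `b`. -/
theorem abs_card_ne_zero_div_card_sub_le
    (h : ∀ j k, |𝔼 ω, ((X ω).descFactorial j * (Y ω).descFactorial k : ℝ) - a ^ j * b ^ k|
      ≤ B ^ (j + k) * δ) :
    |#{ω | X ω ≠ 0 ∧ Y ω ≠ 0} / (Fintype.card Ω : ℝ)
      - (1 - Real.exp (-a)) * (1 - Real.exp (-b))| ≤ Real.exp B ^ 2 * δ := by
  have hprob : HasSum
      (fun p : ℕ × ℕ => indicatorCoeff p.1 * indicatorCoeff p.2
        * 𝔼 ω, ((X ω).descFactorial p.1 * (Y ω).descFactorial p.2 : ℝ))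
      (#{ω | X ω ≠ 0 ∧ Y ω ≠ 0} / (Fintype.card Ω : ℝ)) := by
    have hω (ω : Ω) := hasSum_mul_prod (hasSum_indicatorCoeff_mul_descFactorial (X ω))
      (hasSum_indicatorCoeff_mul_descFactorial (Y ω))
    simp only [mul_mul_mul_comm, mul_ite, mul_one, mul_zero, ← ite_and] at hω
    have hsum := (hasSum_sum fun ω (_ : ω ∈ Finset.univ) => hω ω).div_const (Fintype.card Ω : ℝ)
    simpa only [Finset.sum_boole, ← Finset.mul_sum, mul_div_assoc, and_comm,
      Fintype.expect_eq_sum_div_card] using hsum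
  have hlimit := hasSum_mul_prod (hasSum_indicatorCoeff_mul_pow a)
    (hasSum_indicatorCoeff_mul_pow b)
  simp only [mul_mul_mul_comm] at hlimit
  have hbound : HasSum (fun p : ℕ × ℕ => B ^ p.1 / p.1 ! * (B ^ p.2 / p.2 !) * δ)
      (Real.exp B ^ 2 * δ) := by
    rw [sq]
    exact (hasSum_mul_prod (hasSum_pow_div_factorial B) (hasSum_pow_div_factorial B)).mul_right δ
  refine (hprob.sub hlimit).norm_le_of_bounded hbound fun ⟨j, k⟩ => ?_
  calc ‖_‖ = |indicatorCoeff j| * |indicatorCoeff k|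
        * |𝔼 ω, ((X ω).descFactorial j * (Y ω).descFactorial k : ℝ) - a ^ j * b ^ k| := by
        rw [← abs_mul, ← abs_mul, mul_sub, Real.norm_eq_abs]
    _ ≤ 1 / j ! * (1 / k !) * (B ^ (j + k) * δ) := by
        gcongr
        exacts [abs_indicatorCoeff_le j, abs_indicatorCoeff_le k, h j k]
    _ = B ^ j / j ! * (B ^ k / k !) * δ := by ring

end FactorialMoments

theorem hasOpposingAdjacencies_of_nonempty_slots {m : ℕ} {π : Equiv.Perm (Fin (m + 1))}
    (hinc : (incSlots π).Nonempty) (hdec : (decSlots π).Nonempty) :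
    HasOpposingAdjacencies ⟨m + 1, π⟩ := by
  obtain ⟨s, hs⟩ := hinc
  obtain ⟨t, ht⟩ := hdec
  exact ⟨⟨s.castSucc, s.succ, Fin.covBy_iff.2 (by simp), (Finset.mem_filter.1 hs).2⟩,
    t.castSucc, t.succ, Fin.covBy_iff.2 (by simp), (Finset.mem_filter.1 ht).2⟩

theorem card_slots_ne_zero_div_card_le_zeroDensity (m : ℕ) :
    #{π : Equiv.Perm (Fin (m + 1)) | #(incSlots π) ≠ 0 ∧ #(decSlots π) ≠ 0}
      / (Fintype.card (Equiv.Perm (Fin (m + 1))) : ℝ) ≤ zeroDensity (m + 1) := by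
  rw [zeroDensity, Fintype.card_perm, Fintype.card_fin]
  gcongr with π
  rintro ⟨hinc, hdec⟩
  exact mu_one_eq_zero_of_hasOpposingAdjacencies <| hasOpposingAdjacencies_of_nonempty_slots
    (Finset.card_ne_zero.1 hinc) (Finset.card_ne_zero.1 hdec)

theorem sub_div_le_zeroDensity (n : ℕ) (hn : 1 ≤ n) :
    (1 - 1 / Real.exp 1) ^ 2 - Real.exp 3 ^ 2 / n ≤ zeroDensity n := by
  obtain ⟨m, rfl⟩ : ∃ m, n = m + 1 := ⟨n - 1, by omega⟩
  have hmoments := abs_card_ne_zero_div_card_sub_le (a := 1) (b := 1) (B := 3)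
    (δ := 1 / (m + 1)) (X := fun π : Equiv.Perm (Fin (m + 1)) => #(incSlots π))
    (Y := fun π => #(decSlots π)) fun j k => by
      simpa [adjMoment, div_eq_mul_inv] using abs_adjMoment_sub_one_le m j k
  rw [← sq, Real.exp_neg, ← one_div, mul_one_div] at hmoments
  push_cast
  linarith [(abs_le.1 hmoments).1, card_slots_ne_zero_div_card_le_zeroDensity m]

theorem zeroDensity_le_one (n : ℕ) : zeroDensity n ≤ 1 := by
  refine div_le_one_of_le₀ (Nat.cast_le.2 ?_) (by positivity)
  simpa [Fintype.card_perm] using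
    Finset.card_le_univ (Finset.univ.filter fun p : Equiv.Perm (Fin n) => mu one ⟨n, p⟩ = 0)

theorem le_liminf_of_sub_div_le {u : ℕ → ℝ} {a C : ℝ}
    (hu : Filter.IsBoundedUnder (· ≤ ·) Filter.atTop u)
    (h : ∀ n : ℕ, 1 ≤ n → a - C / n ≤ u n) : a ≤ Filter.liminf u Filter.atTop := by
  have hlim : Filter.Tendsto (fun n : ℕ => a - C / n) Filter.atTop (nhds a) := by
    simpa using (tendsto_const_div_atTop_nhds_zero_nat C).const_sub a
  rw [← hlim.liminf_eq]
  exact Filter.liminf_le_liminf (Filter.eventually_atTop.2 ⟨1, h⟩) hlim.isBoundedUnder_ge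
    hu.isCoboundedUnder_ge

theorem le_sq_one_sub_one_div_exp_one : (0.3995 : ℝ) ≤ (1 - 1 / Real.exp 1) ^ 2 := by
  have h : 1 / Real.exp 1 ≤ 0.3679 := by
    rw [div_le_iff₀ (Real.exp_pos 1)]
    linarith [Real.exp_one_gt_d9]
  nlinarith

/-- **(Corollary `cor-incdec`.)**  There is a constant `C > 0` such that for
every `n ≥ 1`, the proportion of permutations `π` of length `n` with
`μ(1,π) = 0` is at least `(1 − 1/e)² − C/n`.  In particular
`liminf_{n→∞}` of this proportion is at least `(1 − 1/e)² ≥ 0.3995`. -/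
theorem density_of_mobius_zeros :
    (∃ C : ℝ, 0 < C ∧ ∀ n : ℕ, 1 ≤ n →
        (1 - 1 / Real.exp 1) ^ 2 - C / n ≤ zeroDensity n) ∧
      (1 - 1 / Real.exp 1) ^ 2 ≤ Filter.liminf zeroDensity Filter.atTop ∧
      (0.3995 : ℝ) ≤ (1 - 1 / Real.exp 1) ^ 2 := by
  exact ⟨⟨Real.exp 3 ^ 2, by positivity, sub_div_le_zeroDensity⟩,
    le_liminf_of_sub_div_le (Filter.isBoundedUnder_of ⟨1, zeroDensity_le_one⟩)
      sub_div_le_zeroDensity,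
    le_sq_one_sub_one_div_exp_one⟩
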